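/- For every ε = (ε_1,ε_2,ε_3) ∈ {-1,1}^3, every j ∈ {1,2,3,4} and every δ ∈ {-1,1}, the following seven vectors form a ℤ-basis of ℤ^7 (equivalently, the 7×7 integer matrix with these columns has determinant ±1): u_1, u_2, u_3, the three vectors among v_7, v_8, v_9, v_10 other than v_{6+j}, and v_11 if δ = 1 or v_12 if δ = −1; here u_1 = v_1 if ε_1 = 1 and u_1 = v_6 if ε_1 = −1, u_2 = v_2 if ε_2 = 1 and u_2 = v_5 if ε_2 = −1, u_3 = v_3 if ε_3 = 1 and u_3 = v_4 if ε_3 = −1. (These 64 sets generate the maximal cones of the fan of the Nill–Paffenholz toric manifold; the statement is the smoothness condition (d) for the Fano polytope.) -/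

import Mathlib

/-!
In each case the seven columns have an explicit dual basis with integer coordinates: `uᵢ` is
`± eᵢ` up to a multiple of `e₇`, the vectors `v₇, v₈, v₉, v₁₀` are `e₄, e₅, e₆, -(e₄ + e₅ + e₆)` up
to a multiple of `e₇`, and `v₁₁, v₁₂` are `± e₇`, so the coordinates of a vector are found first in
`ℤ⁷ / ℤe₇` and then along `e₇`. The dual basis is recorded as the integer matrix `dualBasis`, a
left inverse of `M ε j δ` (`dualBasis_mul_M`). Hence the determinant is a unit of `ℤ`, that is, `±1`.
-/

noncomputable section

/-- The twelve vertices of the Fano polytope of the Nill–Paffenholz toric Fano 7-fold,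
as integer vectors. -/
def vz : Fin 12 → Fin 7 → ℤ :=
  ![![1,0,0,0,0,0,0], ![0,1,0,0,0,0,0], ![0,0,1,0,0,0,0],
    ![0,0,-1,0,0,0,-1], ![0,-1,0,0,0,0,-1], ![-1,0,0,0,0,0,-1],
    ![0,0,0,1,0,0,0], ![0,0,0,0,1,0,0], ![0,0,0,0,0,1,0],
    ![0,0,0,-1,-1,-1,2], ![0,0,0,0,0,0,1], ![0,0,0,0,0,0,-1]]

/-- For `j : Fin 4`, the indices (among `6,7,8,9`, i.e. `v₇,v₈,v₉,v₁₀`) of the three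
vectors other than `v_{6+j}`, listed in increasing order. -/
def others (j : Fin 4) (k : Fin 3) : Fin 12 :=
  ⟨6 + (if (k : ℕ) < (j : ℕ) then (k : ℕ) else (k : ℕ) + 1), by
    have hk := k.isLt; split <;> omega⟩

/-- The `7 × 7` integer matrix whose columns are: `u₁,u₂,u₃` (where `uᵢ` is `vᵢ` or its
"opposite" `v₆,v₅,v₄` according to the sign `εᵢ`), the three of `v₇,v₈,v₉,v₁₀` other
than `v_{6+j}`, and `v₁₁` (if `δ = 1`, i.e. `true`) or `v₁₂` (if `δ = -1`). -/
def M (ε : Fin 3 → Bool) (j : Fin 4) (δ : Bool) : Matrix (Fin 7) (Fin 7) ℤ :=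
  Matrix.of fun i k =>
    (![if ε 0 then vz 0 else vz 5,
       if ε 1 then vz 1 else vz 4,
       if ε 2 then vz 2 else vz 3,
       vz (others j 0), vz (others j 1), vz (others j 2),
       if δ then vz 10 else vz 11] : Fin 7 → Fin 7 → ℤ) k i

/-- The sign `±1` encoded by a Boolean. -/
def sgn (b : Bool) : ℤ := if b then 1 else -1

/-- The correction along `e₇`: it is `1` when `uᵢ = -eᵢ - e₇` is used instead of `eᵢ`. -/
def neg01 (b : Bool) : ℤ := if b then 0 else 1

/-- For the three of `v₇, v₈, v₉, v₁₀` that remain after omitting the one indexed by `j`, their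
coordinates along `e₄, e₅, e₆` form a basis of `ℤ³`. The first three rows are its dual basis; the
last row is minus the `e₇`-part contributed by `v₁₀`, whose last coordinate is `2`. -/
def middle (j : Fin 4) : Fin 4 → Fin 3 → ℤ :=
  ![![![-1, 1, 0], ![-1, 0, 1], ![-1, 0, 0], ![2, 0, 0]],
    ![![1, -1, 0], ![0, -1, 1], ![0, -1, 0], ![0, 2, 0]],
    ![![1, 0, -1], ![0, 1, -1], ![0, 0, -1], ![0, 0, 2]],
    ![![1, 0, 0], ![0, 1, 0], ![0, 0, 1], ![0, 0, 0]]] j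

/-- The matrix whose rows are the coordinate functionals of `ℤ⁷` with respect to the columns of
`M ![a, b, c] j δ`. -/
def dualBasis (a b c : Bool) (j : Fin 4) (δ : Bool) : Matrix (Fin 7) (Fin 7) ℤ :=
  !![sgn a, 0, 0, 0, 0, 0, 0;
     0, sgn b, 0, 0, 0, 0, 0;
     0, 0, sgn c, 0, 0, 0, 0;
     0, 0, 0, middle j 0 0, middle j 0 1, middle j 0 2, 0;
     0, 0, 0, middle j 1 0, middle j 1 1, middle j 1 2, 0;
     0, 0, 0, middle j 2 0, middle j 2 1, middle j 2 2, 0;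
     -sgn δ * neg01 a, -sgn δ * neg01 b, -sgn δ * neg01 c,
       sgn δ * middle j 3 0, sgn δ * middle j 3 1, sgn δ * middle j 3 2, sgn δ]

theorem dualBasis_mul_M : ∀ (a b c : Bool) (j : Fin 4) (δ : Bool),
    dualBasis a b c j δ * M ![a, b, c] j δ = 1 := by
  decide +kernel

/-- Smoothness condition (d): for each of the 64 maximal cones the generating seven
integer vectors form a ℤ-basis of ℤ⁷, i.e. the matrix of columns has determinant `±1`. -/
theorem cones_unimodular (ε : Fin 3 → Bool) (j : Fin 4) (δ : Bool) :
    (M ε j δ).det = 1 ∨ (M ε j δ).det = -1 := by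
  have hε : ε = ![ε 0, ε 1, ε 2] := by
    ext i
    fin_cases i <;> rfl
  rw [hε]
  exact Int.isUnit_iff.mp
    (Matrix.isUnit_det_of_left_inverse (dualBasis_mul_M (ε 0) (ε 1) (ε 2) j δ))
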